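/- There exists an integer g₀ such that the following holds. Let (G_n)_{n≥1} be a sequence of cubic (3-regular) graphs with girth(G_1) ≥ g₀, girth(G_n) → ∞ as n → ∞, diam(G_n) ≤ (3/2)·girth(G_n) + 5 for every n ≥ 1, |E(G_n)| ≤ (3/2)·2^{(3·girth(G_n)+6)/4} for every n ≥ 1, and 1 < ⌊girth(G_n)/6⌋ < ⌊girth(G_{n+1})/6⌋ for every n ≥ 1. Then there exist a set S of size 96 with a fixed-point-free involution and a sequence of S-labellings of (G_n) satisfying the C'(1/6)-small cancellation property. -/

import Mathlib

open SimpleGraph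

/-- An `S`-labelling of `G` (with `inv` the formal-inverse involution on `S`):
`ℓ (x,y)` is the label of the ordered pair `(x,y)`, and `ℓ (y,x) = inv (ℓ (x,y))`
for adjacent pairs. -/
def IsGoodLabelling {V S : Type*} (G : SimpleGraph V) (inv : S → S) (ℓ : V → V → S) : Prop :=
  ∀ x y, G.Adj x y → ℓ y x = inv (ℓ x y)

/-- The labelling `ℓ` is reduced: distinct neighbours of a vertex get distinct labels. -/
def ReducedLabelling {V S : Type*} (G : SimpleGraph V) (ℓ : V → V → S) : Prop :=
  ∀ v u w, G.Adj v u → G.Adj v w → u ≠ w → ℓ v u ≠ ℓ v w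

/-- The word read along a walk. -/
def walkWord {V S : Type*} {G : SimpleGraph V} (ℓ : V → V → S) {u v : V} (p : G.Walk u v) :
    List S := p.darts.map (fun d => ℓ d.toProd.1 d.toProd.2)

/-- The `C'(lam)`-small cancellation property for a sequence of labellings of a
sequence of graphs: every labelling is a reduced `S`-labelling, and no word of length
at least `lam * girth (G i)` read along a path of `G i` appears as the word of a
different path in any graph of the sequence. -/
def SmallCancellation {ι : Type*} (V : ι → Type*) (G : ∀ i, SimpleGraph (V i)) {S : Type*}
    (inv : S → S) (ℓ : ∀ i, V i → V i → S) (lam : ℝ) : Prop :=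
  (∀ i, IsGoodLabelling (G i) inv (ℓ i)) ∧
  (∀ i, ReducedLabelling (G i) (ℓ i)) ∧
  ∀ (i j : ι) (u v : V i) (p : (G i).Walk u v) (x y : V j) (q : (G j).Walk x y),
    p.IsPath → q.IsPath →
    lam * ((G i).girth : ℝ) ≤ (p.length : ℝ) →
    walkWord (ℓ i) p = walkWord (ℓ j) q →
    (⟨i, u, v, p⟩ : Σ k, Σ a : V k, Σ b : V k, (G k).Walk a b) = ⟨j, x, y, q⟩

/-!
Rosenfeld's counting argument. Choose the labels of a graph edge by edge and show inductively that
every new edge multiplies the number of admissible labellings by at least `β`, out of `card S`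
choices. The labellings lost at a new edge are charged to the bad events it completes: two equal
labels at a vertex, two paths of length `k` with the same word, a path repeating a word of an
earlier graph. If the labels of `n` edges are determined by the others whenever an event occurs,
then the induction hypothesis for the last `n - 1` of these edges shows that the event costs at most
a fraction `β⁻¹ ^ (n - 1) / card S` of the labellings.

When two paths `P ≠ Q` of length `k < girth / 2` read the same word, all `k` labels on `P` are
determined by the labels off `P`. For the two paths form a forest; if some labels on `P` depended
only on each other, then either `P` and `Q` would traverse the same edge at the same time, or they
would meet at a vertex, `Q` arriving along the edge by which `P` leaves. Neither can happen in a
reduced labelling in which no label is its own inverse.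

With `k = ⌊girth / 6⌋` and `c = 2 ^ (9 / 2)`, a graph has `O(c ^ k)` edges and `O((2 * c) ^ k)`
paths of length `k`. Each of these costs `O(k * (2 / β) ^ k)` per edge, which is summable over all
`k` if `4 * c < β`. Equal labels at a vertex cost `4`, and `β = 91` leaves `96 - 91 - 4 = 1` for
the repeated words.
-/

/-! ### Functions avoiding bad events -/

section Avoidance

open Finset

/-- A bad event for random functions `f : E → S`. Whether it occurs depends on the values of `f` on
`scope`, and when it occurs the values on `core` are determined by those off `core`; hence
its probability, conditioned on the values off `core`, is at most `(card S)⁻¹ ^ #core`. -/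
structure BadEvent (E S : Type*) where
  core : Finset E
  scope : Finset E
  Occurs : (E → S) → Prop
  core_nonempty : core.Nonempty
  core_subset_scope : core ⊆ scope
  dependsOn_scope : DependsOn Occurs (scope : Set E)
  determined : ∀ f g, Occurs f → Occurs g → (∀ e ∉ core, f e = g e) → f = g

namespace BadEvent

variable {E S ι κ : Type*} {A : ι → BadEvent E S} {B : κ → BadEvent E S} {X Y : Finset E}
  {f g : E → S} {e : E} {β : ℝ}

/-- Every point in the scope of an event lies in the core of an event that is at least as
likely and has the same scope, so that a failure caused by fixing `e` can be charged to an
event with `e` in its core. -/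
def CoresCover (A : ι → BadEvent E S) : Prop :=
  ∀ b, ∀ e ∈ (A b).scope, ∃ b', e ∈ (A b').core ∧ (A b').scope = (A b).scope ∧
    ∀ f, (A b).Occurs f → (A b').Occurs f

lemma CoresCover.sumElim (hA : CoresCover A) (hB : CoresCover B) :
    CoresCover (Sum.elim A B) := by
  rintro (b | b) e he
  · obtain ⟨b', h⟩ := hA b e he
    exact ⟨Sum.inl b', h⟩
  · obtain ⟨b', h⟩ := hB b e he
    exact ⟨Sum.inr b', h⟩

section Weight

variable [Fintype ι]

open Classical in
/-- The total load on `e` of the events with `e` in their core. In the counting argument, an event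
with a core of size `n` has probability at most `β⁻¹ ^ (n - 1) / card S` among the functions for
which no event decided before `e` occurs. -/
noncomputable def weight (A : ι → BadEvent E S) (β : ℝ) (e : E) : ℝ :=
  ∑ b with e ∈ (A b).core, β⁻¹ ^ (#(A b).core - 1)

lemma weight_nonneg (A : ι → BadEvent E S) (hβ : 0 ≤ β) (e : E) : 0 ≤ weight A β e :=
  sum_nonneg fun _ _ => by positivity

lemma weight_of_card_core_eq {n : ℕ} (hcard : ∀ b, #(A b).core = n) (β : ℝ) (e : E)
    [DecidablePred fun b => e ∈ (A b).core] :
    weight A β e = #{b | e ∈ (A b).core} * β⁻¹ ^ (n - 1) := by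
  simp only [weight, hcard, sum_const, nsmul_eq_mul]
  congr!

variable [Fintype κ]

lemma weight_sumElim (A : ι → BadEvent E S) (B : κ → BadEvent E S) (β : ℝ) (e : E) :
    weight (Sum.elim A B) β e = weight A β e + weight B β e := by
  simp only [weight, sum_filter, Fintype.sum_sum_type, Sum.elim_inl, Sum.elim_inr]
  rfl

lemma weight_sigma {τ : κ → Type*} [∀ a, Fintype (τ a)] (A : ∀ a, τ a → BadEvent E S) (β : ℝ)
    (e : E) : weight (fun b : Σ a, τ a => A b.1 b.2) β e = ∑ a, weight (A a) β e := by
  simp only [weight, sum_filter, Fintype.sum_sigma]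

lemma weight_prod (A : ι → κ → BadEvent E S) (β : ℝ) (e : E) :
    weight (fun b : ι × κ => A b.1 b.2) β e = ∑ c, weight (A · c) β e := by
  simp only [weight, sum_filter, Fintype.sum_prod_type_right]

end Weight

section Counting

variable [Fintype E] [Fintype S]

open Classical in
/-- The functions for which no event of the family `A` with scope inside `X` occurs. -/
noncomputable def avoiding (A : ι → BadEvent E S) (X : Finset E) : Finset (E → S) :=
  {f | ∀ b, (A b).scope ⊆ X → ¬ (A b).Occurs f}

lemma mem_avoiding : f ∈ avoiding A X ↔ ∀ b, (A b).scope ⊆ X → ¬ (A b).Occurs f := by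
  simp only [avoiding, mem_filter_univ]

lemma mem_avoiding_of_eqOn (hf : f ∈ avoiding A X) (hYX : Y ⊆ X) (hfg : ∀ e ∈ Y, f e = g e) :
    g ∈ avoiding A Y := by
  rw [mem_avoiding] at hf ⊢
  intro b hb hg
  have heq : (A b).Occurs f = (A b).Occurs g :=
    (A b).dependsOn_scope fun e he => hfg e (hb (mem_coe.1 he))
  exact hf b (hb.trans hYX) (heq ▸ hg)

open Classical in
lemma card_occurs_mul_le (A : ι → BadEvent E S) (X : Finset E) (b : ι) :
    #{f ∈ avoiding A X | (A b).Occurs f} * Fintype.card S ^ #(A b).core ≤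
      #(avoiding A (X \ (A b).core)) := by
  set C := (A b).core
  let resample (p : (E → S) × (C → S)) (e : E) : S := if h : e ∈ C then p.2 ⟨e, h⟩ else p.1 e
  have hcard : Fintype.card S ^ #C = #(univ : Finset (C → S)) := by simp
  rw [hcard, ← card_product]
  refine card_le_card_of_injOn resample ?_ ?_
  · rintro ⟨f, g⟩ hfg
    obtain ⟨hf, -⟩ := mem_filter.1 (mem_product.1 (mem_coe.1 hfg)).1
    refine mem_avoiding_of_eqOn hf sdiff_subset fun e he => ?_
    simp [resample, (mem_sdiff.1 he).2]
  · rintro ⟨f, g⟩ hfg ⟨f', g'⟩ hfg' heq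
    have hocc := (mem_filter.1 (mem_product.1 (mem_coe.1 hfg)).1).2
    have hocc' := (mem_filter.1 (mem_product.1 (mem_coe.1 hfg')).1).2
    refine Prod.ext ((A b).determined f f' hocc hocc' fun e he => ?_) (funext fun e => ?_)
    · have he' : e ∉ C := he
      simpa only [resample, dif_neg he'] using congrFun heq e
    · simpa [resample] using congrFun heq e

open Classical in
lemma pow_mul_card_avoiding_sdiff_le (hβ : 0 ≤ β)
    (hstep : ∀ Y ⊂ X, ∀ e ∉ Y,
      β * #(avoiding A Y) ≤ Fintype.card S * #(avoiding A (insert e Y)))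
    {W : Finset E} (hW : W ⊆ X) :
    β ^ #W * #(avoiding A (X \ W)) ≤ (Fintype.card S : ℝ) ^ #W * #(avoiding A X) := by
  induction W using Finset.induction_on with
  | empty => simp
  | insert e W heW ih =>
    have heX : e ∈ X := hW (mem_insert_self e W)
    have hinsert : insert e (X \ insert e W) = X \ W := by
      rw [sdiff_insert, insert_erase (mem_sdiff.2 ⟨heX, heW⟩)]
    have he : e ∉ X \ insert e W := by simp
    have hstep' := hstep (X \ insert e W)
      (sdiff_ssubset hW (insert_nonempty e W)) e he
    rw [hinsert] at hstep'
    rw [card_insert_of_notMem heW]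
    calc β ^ (#W + 1) * #(avoiding A (X \ insert e W))
        = β ^ #W * (β * #(avoiding A (X \ insert e W))) := by ring
      _ ≤ β ^ #W * (Fintype.card S * #(avoiding A (X \ W))) := by gcongr
      _ = Fintype.card S * (β ^ #W * #(avoiding A (X \ W))) := by ring
      _ ≤ Fintype.card S * ((Fintype.card S : ℝ) ^ #W * #(avoiding A X)) := by
          exact mul_le_mul_of_nonneg_left (ih ((subset_insert e W).trans hW)) (Nat.cast_nonneg _)
      _ = (Fintype.card S : ℝ) ^ (#W + 1) * #(avoiding A X) := by ring

open Classical in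
lemma card_mul_card_occurs_le (hβ : 0 < β) (hS : 0 < Fintype.card S)
    (hstep : ∀ Y ⊂ X, ∀ e ∉ Y,
      β * #(avoiding A Y) ≤ Fintype.card S * #(avoiding A (insert e Y)))
    (heX : e ∉ X) {b : ι} (heb : e ∈ (A b).core) (hb : (A b).scope ⊆ insert e X) :
    (Fintype.card S : ℝ) * #{f ∈ avoiding A X | (A b).Occurs f} ≤
      β⁻¹ ^ (#(A b).core - 1) * #(avoiding A X) := by
  set q : ℝ := (Fintype.card S : ℝ) with hq
  have hqpos : 0 < q := Nat.cast_pos.2 hS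
  set W := (A b).core.erase e
  have hWX : W ⊆ X := subset_insert_iff.1 ((A b).core_subset_scope.trans hb)
  have hsdiff : X \ (A b).core = X \ W := by
    grind
  have hcore : #(A b).core = #W + 1 := (card_erase_add_one heb).symm
  have hresample : #{f ∈ avoiding A X | (A b).Occurs f} * q ^ (#W + 1) ≤
      #(avoiding A (X \ W)) := by
    rw [← hsdiff, ← hcore, hq]; exact_mod_cast card_occurs_mul_le A X b
  have hchain : β ^ #W * #(avoiding A (X \ W)) ≤ q ^ #W * #(avoiding A X) :=
    pow_mul_card_avoiding_sdiff_le hβ.le hstep hWX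
  rw [hcore, Nat.add_sub_cancel, inv_pow, inv_mul_eq_div, le_div_iff₀ (by positivity)]
  refine le_of_mul_le_mul_left ?_ (pow_pos hqpos #W)
  calc q ^ #W * (q * #{f ∈ avoiding A X | (A b).Occurs f} * β ^ #W)
      = β ^ #W * (#{f ∈ avoiding A X | (A b).Occurs f} * q ^ (#W + 1)) := by ring
    _ ≤ β ^ #W * #(avoiding A (X \ W)) := by gcongr
    _ ≤ q ^ #W * #(avoiding A X) := hchain

open Classical in
lemma CoresCover.exists_occurs (hA : CoresCover A) (hf : f ∈ avoiding A X)
    (hf' : f ∉ avoiding A (insert e X)) :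
    ∃ b, e ∈ (A b).core ∧ (A b).scope ⊆ insert e X ∧ (A b).Occurs f := by
  rw [mem_avoiding] at hf hf'
  push Not at hf'
  obtain ⟨b, hb, hocc⟩ := hf'
  have he : e ∈ (A b).scope := by
    by_contra he
    exact hf b ((subset_insert_iff_of_notMem he).1 hb) hocc
  obtain ⟨b', heb', hscope, himp⟩ := hA b e he
  exact ⟨b', heb', hscope ▸ hb, himp f hocc⟩

variable [Fintype ι]

open Classical in
lemma CoresCover.card_avoiding_le (hA : CoresCover A) (X : Finset E) (e : E) :
    #(avoiding A X) ≤ #(avoiding A (insert e X)) +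
      ∑ b with e ∈ (A b).core ∧ (A b).scope ⊆ insert e X,
        #{f ∈ avoiding A X | (A b).Occurs f} := by
  have hsub : avoiding A X ⊆ avoiding A (insert e X) ∪
      ({b | e ∈ (A b).core ∧ (A b).scope ⊆ insert e X} : Finset ι).biUnion
        fun b => {f ∈ avoiding A X | (A b).Occurs f} := by
    intro f hf
    by_cases hf' : f ∈ avoiding A (insert e X)
    · exact mem_union_left _ hf'
    · obtain ⟨b, heb, hb, hocc⟩ := hA.exists_occurs hf hf'
      exact mem_union_right _
        (mem_biUnion.2 ⟨b, by simp [heb, hb], mem_filter.2 ⟨hf, hocc⟩⟩)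
  exact (card_le_card hsub).trans <| (card_union_le _ _).trans <| by
    gcongr; exact card_biUnion_le

open Classical in
lemma CoresCover.mul_card_avoiding_le (hA : CoresCover A) (hβ : 0 < β)
    (hweight : ∀ e, β + weight A β e ≤ Fintype.card S)
    (X : Finset E) {e : E} (he : e ∉ X) :
    β * #(avoiding A X) ≤ Fintype.card S * #(avoiding A (insert e X)) := by
  induction X using Finset.strongInduction generalizing e with
  | H X ih =>
    set q : ℝ := (Fintype.card S : ℝ) with hq
    set a : ℝ := (#(avoiding A X) : ℝ) with ha
    have hqpos : 0 < q := hβ.trans_le <|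
      (le_add_of_nonneg_right (weight_nonneg A hβ.le e)).trans (hweight e)
    have hsum : q * ∑ b with e ∈ (A b).core ∧ (A b).scope ⊆ insert e X,
        (#{f ∈ avoiding A X | (A b).Occurs f} : ℝ) ≤ (q - β) * a := by
      calc q * ∑ b with e ∈ (A b).core ∧ (A b).scope ⊆ insert e X,
            (#{f ∈ avoiding A X | (A b).Occurs f} : ℝ)
          ≤ ∑ b with e ∈ (A b).core ∧ (A b).scope ⊆ insert e X,
              β⁻¹ ^ (#(A b).core - 1) * a := by
            rw [mul_sum]
            exact sum_le_sum fun b hb => card_mul_card_occurs_le hβ (Nat.cast_pos.1 hqpos)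
              (fun Y hY e he => ih Y hY he) he (mem_filter.1 hb).2.1 (mem_filter.1 hb).2.2
        _ ≤ ∑ b with e ∈ (A b).core, β⁻¹ ^ (#(A b).core - 1) * a :=
            sum_le_sum_of_subset_of_nonneg (monotone_filter_right _ fun _ _ h => h.1)
              fun _ _ _ => by positivity
        _ ≤ (q - β) * a := by
            rw [← sum_mul, ← weight]; gcongr; linarith [hweight e]
    have hcover : a ≤ #(avoiding A (insert e X)) +
        ∑ b with e ∈ (A b).core ∧ (A b).scope ⊆ insert e X,
          (#{f ∈ avoiding A X | (A b).Occurs f} : ℝ) := by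
      rw [ha]; exact_mod_cast hA.card_avoiding_le X e
    linarith [mul_le_mul_of_nonneg_left hcover hqpos.le]

end Counting

theorem CoresCover.exists_forall_not_occurs [Finite E] [Fintype S] [Fintype ι]
    (hA : CoresCover A) (hβ : 0 < β) (hweight : ∀ e, β + weight A β e ≤ Fintype.card S) :
    ∃ f : E → S, ∀ b, ¬ (A b).Occurs f := by
  classical
  let _ := Fintype.ofFinite E
  have hvalue : ∀ _ : E, Nonempty S := fun e => by
    rw [← Fintype.card_pos_iff, ← Nat.cast_pos (α := ℝ)]
    exact hβ.trans_le <|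
      (le_add_of_nonneg_right (weight_nonneg A hβ.le e)).trans (hweight e)
  have hnonempty : ∀ X, 0 < #(avoiding A X) := by
    intro X
    induction X using Finset.induction_on with
    | empty =>
      refine card_pos.2 ⟨fun e => (hvalue e).some, mem_avoiding.2 fun b hb _ => ?_⟩
      obtain ⟨e, he⟩ := (A b).core_nonempty
      exact notMem_empty e (hb ((A b).core_subset_scope he))
    | insert e X he ih =>
      have hpos : 0 < β * #(avoiding A X) := mul_pos hβ (Nat.cast_pos.2 ih)
      have hstep := hpos.trans_le (hA.mul_card_avoiding_le hβ hweight X he)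
      exact_mod_cast pos_of_mul_pos_right hstep (Nat.cast_nonneg _)
  obtain ⟨f, hf⟩ := card_pos.1 (hnonempty univ)
  exact ⟨f, fun b => mem_avoiding.1 hf b (subset_univ _)⟩

end BadEvent

end Avoidance

/-! ### Paths in forests -/

section Paths

variable {V V' S : Type*} {G H : SimpleGraph V} {G' : SimpleGraph V'} {k n t i j : ℕ}
  {inv : S → S} {ℓ : V → V → S} {ℓ' : V' → V' → S}

lemma length_walkWord (ℓ : V → V → S) {u v : V} (p : G.Walk u v) :
    (walkWord ℓ p).length = p.length := by
  rw [walkWord, List.length_map, Walk.length_darts]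

/-- The (directed) paths of length `k` in `G`. Such a path is also regarded as the function sending
`t ≤ k` to its `t`-th vertex. -/
structure PathOfLength (G : SimpleGraph V) (k : ℕ) where
  {source : V}
  {target : V}
  walk : G.Walk source target
  isPath : walk.IsPath
  length_walk : walk.length = k

namespace PathOfLength

instance : CoeFun (PathOfLength G k) fun _ => ℕ → V := ⟨fun P => P.walk.getVert⟩

lemma adj (P : PathOfLength G k) (ht : t < k) : G.Adj (P t) (P (t + 1)) :=
  P.walk.adj_getVert_succ (ht.trans_eq P.length_walk.symm)

lemma apply_inj (P : PathOfLength G k) (hi : i ≤ k) (hj : j ≤ k) : P i = P j ↔ i = j :=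
  P.isPath.getVert_injOn.eq_iff (hi.trans_eq P.length_walk.symm) (hj.trans_eq P.length_walk.symm)

lemma exists_turn {u v w : V} (hu : G.Adj v u) (hw : G.Adj v w) (huw : u ≠ w) :
    ∃ P : PathOfLength G 2, P 0 = u ∧ P 1 = v ∧ P 2 = w :=
  ⟨⟨.cons hu.symm (.cons hw .nil), by simp [hu.ne', hw.ne, huw], rfl⟩, rfl, rfl, rfl⟩

lemma apply_zero (P : PathOfLength G k) : P 0 = P.source := P.walk.getVert_zero

lemma apply_length (P : PathOfLength G k) : P k = P.target :=
  P.walk.getVert_of_length_le P.length_walk.le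

lemma ext {P Q : PathOfLength G k} (h : ∀ t ≤ k, P t = Q t) : P = Q := by
  have hsource : P.source = Q.source := by simpa using h 0 k.zero_le
  have htarget : P.target = Q.target := by simpa only [apply_length] using h k le_rfl
  obtain @⟨u, v, p, hp, hpk⟩ := P
  obtain @⟨u', v', q, hq, hqk⟩ := Q
  obtain rfl : u = u' := hsource
  obtain rfl : v = v' := htarget
  obtain rfl : p = q := Walk.ext_getVert_le_length (hpk.trans hqk.symm) fun t ht => h t (hpk ▸ ht)
  rfl

instance [Finite V] : Finite (PathOfLength G k) :=
  Finite.of_injective (fun P (t : Fin (k + 1)) => P t) fun _ _ h =>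
    ext fun t ht => congrFun h ⟨t, Nat.lt_succ_of_le ht⟩

noncomputable instance [Finite V] : Fintype (PathOfLength G k) := Fintype.ofFinite _

/-- The path `P` traversed backwards. -/
def reverse (P : PathOfLength G k) : PathOfLength G k where
  walk := P.walk.reverse
  isPath := P.isPath.reverse
  length_walk := P.walk.length_reverse.trans P.length_walk

lemma reverse_apply (P : PathOfLength G k) (t : ℕ) : P.reverse t = P (k - t) :=
  (P.walk.getVert_reverse t).trans (by rw [P.length_walk])

lemma reverse_reverse (P : PathOfLength G k) : P.reverse.reverse = P :=
  ext fun t ht => by rw [reverse_apply, reverse_apply, Nat.sub_sub_self ht]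

/-- The subpath of `P` of length `n` that starts at the `i`-th vertex of `P`. -/
def segment (P : PathOfLength G k) (i n : ℕ) (hin : i + n ≤ k) : PathOfLength G n where
  walk := (P.walk.drop i).take n
  isPath := (P.isPath.drop i).take n
  length_walk := by rw [Walk.take_length, Walk.drop_length, P.length_walk]; omega

lemma segment_apply (P : PathOfLength G k) (hin : i + n ≤ k) (ht : t ≤ n) :
    P.segment i n hin t = P (i + t) :=
  ((P.walk.drop i).take_getVert ..).trans (by rw [min_eq_right ht, Walk.drop_getVert])

open Classical in
/-- The set of edges of `P`. -/
noncomputable def edges (P : PathOfLength G k) : Finset (Sym2 V) := P.walk.edges.toFinset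

lemma mem_edges {P : PathOfLength G k} {e : Sym2 V} :
    e ∈ P.edges ↔ ∃ t < k, s(P t, P (t + 1)) = e := by
  classical
  rw [edges, List.mem_toFinset, Walk.edges, List.mem_map]
  constructor
  · rintro ⟨d, hd, rfl⟩
    obtain ⟨t, ht, rfl⟩ := List.getElem_of_mem hd
    refine ⟨t, by simpa [P.length_walk] using ht, ?_⟩
    rw [Walk.darts_getElem_eq_getVert]; rfl
  · rintro ⟨t, ht, rfl⟩
    have ht' : t < P.walk.darts.length := by simpa [P.length_walk] using ht
    refine ⟨P.walk.darts[t], List.getElem_mem ht', ?_⟩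
    rw [Walk.darts_getElem_eq_getVert]; rfl

lemma edge_mem_edges (P : PathOfLength G k) (ht : t < k) : s(P t, P (t + 1)) ∈ P.edges :=
  mem_edges.2 ⟨t, ht, rfl⟩

lemma edge_inj (P : PathOfLength G k) (hi : i < k) (hj : j < k) :
    s(P i, P (i + 1)) = s(P j, P (j + 1)) ↔ i = j := by
  rw [Sym2.eq_iff, P.apply_inj hi.le hj.le, P.apply_inj hi.le hj, P.apply_inj hi hj.le,
    P.apply_inj hi hj]
  omega

lemma edges_subset_edgeSet (P : PathOfLength G k) : (P.edges : Set (Sym2 V)) ⊆ G.edgeSet := by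
  intro e he
  obtain ⟨t, ht, rfl⟩ := mem_edges.1 he
  exact P.adj ht

lemma card_edges (P : PathOfLength G k) : P.edges.card = k := by
  classical
  rw [edges, List.toFinset_card_of_nodup P.isPath.isTrail.edges_nodup, Walk.length_edges,
    P.length_walk]

lemma edges_reverse (P : PathOfLength G k) : P.reverse.edges = P.edges := by
  classical
  simp [edges, reverse]

/-- The path `P` regarded as a path of a graph `H` that contains all its edges. -/
def transfer (P : PathOfLength G k) (H : SimpleGraph V)
    (hP : (P.edges : Set (Sym2 V)) ⊆ H.edgeSet) : PathOfLength H k where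
  walk := P.walk.transfer H fun e he => hP (by classical simpa [edges] using he)
  isPath := P.isPath.transfer _
  length_walk := (P.walk.length_transfer _).trans P.length_walk

lemma transfer_apply (P : PathOfLength G k) (hP : (P.edges : Set (Sym2 V)) ⊆ H.edgeSet) (t : ℕ) :
    P.transfer H hP t = P t := by
  simp only [Walk.getVert_eq_getD_support, transfer, Walk.support_transfer]

lemma transfer_injective {P Q : PathOfLength G k} {hP : (P.edges : Set (Sym2 V)) ⊆ H.edgeSet}
    {hQ : (Q.edges : Set (Sym2 V)) ⊆ H.edgeSet} (h : P.transfer H hP = Q.transfer H hQ) :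
    P = Q :=
  ext fun t _ => by rw [← transfer_apply P hP, h, transfer_apply]

lemma walkWord_eq_iff {P : PathOfLength G k} {Q : PathOfLength G' k} :
    walkWord ℓ P.walk = walkWord ℓ' Q.walk ↔
      ∀ t < k, ℓ (P t) (P (t + 1)) = ℓ' (Q t) (Q (t + 1)) := by
  have hlen : P.walk.length = Q.walk.length := P.length_walk.trans Q.length_walk.symm
  simp [walkWord, List.ext_getElem_iff, Walk.darts_getElem_eq_getVert, hlen, Q.length_walk]

lemma walkWord_segment_eq {P : PathOfLength G k} {Q : PathOfLength G' k}
    (hword : walkWord ℓ P.walk = walkWord ℓ' Q.walk) (hin : i + n ≤ k) :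
    walkWord ℓ (P.segment i n hin).walk = walkWord ℓ' (Q.segment i n hin).walk := by
  rw [walkWord_eq_iff] at hword ⊢
  intro t ht
  rw [segment_apply _ _ ht.le, segment_apply _ _ ht, segment_apply _ _ ht.le,
    segment_apply _ _ ht]
  exact hword (i + t) (by omega)

lemma eq_of_apply_eq (hgood : IsGoodLabelling G inv ℓ) (hred : ReducedLabelling G ℓ)
    {P Q : PathOfLength G k} (hword : walkWord ℓ P.walk = walkWord ℓ Q.walk) (ht : t ≤ k)
    (h : P t = Q t) : P = Q := by
  rw [walkWord_eq_iff] at hword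
  have hforward : ∀ i < k, P i = Q i → P (i + 1) = Q (i + 1) := by
    intro i hi heq
    by_contra hne
    exact hred _ _ _ (P.adj hi) (heq ▸ Q.adj hi) hne ((hword i hi).trans (by rw [heq]))
  have hbackward : ∀ i < k, P (i + 1) = Q (i + 1) → P i = Q i := by
    intro i hi heq
    by_contra hne
    refine hred _ _ _ (P.adj hi).symm (heq ▸ (Q.adj hi).symm) hne ?_
    rw [hgood _ _ (P.adj hi), hword i hi, ← hgood _ _ (Q.adj hi), heq]
  have hzero : P 0 = Q 0 :=
    Nat.decreasingInduction (motive := fun i _ => P i = Q i)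
      (fun i hi => hbackward i (hi.trans_le ht)) h t.zero_le
  refine ext fun i => ?_
  induction i with
  | zero => exact fun _ => hzero
  | succ i ih => exact fun hi => hforward i hi (ih (Nat.le_of_succ_le hi))

lemma eq_of_isAcyclic (hG : G.IsAcyclic) {P Q : PathOfLength G k} (hsource : P 0 = Q 0)
    (htarget : P k = Q k) : P = Q := by
  rw [apply_zero, apply_zero] at hsource
  rw [apply_length, apply_length] at htarget
  obtain @⟨u, v, p, hp, hpk⟩ := P
  obtain @⟨u', v', q, hq, hqk⟩ := Q
  obtain rfl : u = u' := hsource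
  obtain rfl : v = v' := htarget
  obtain rfl : p = q := congrArg Subtype.val
    ((hG.subsingleton_path u v).elim (⟨p, hp⟩ : G.Path u v) ⟨q, hq⟩)
  rfl

lemma dist_zero_length (hG : G.IsAcyclic) (P : PathOfLength G k) : G.dist (P 0) (P k) = k := by
  have hreach : G.Reachable P.source P.target := P.walk.reachable
  obtain ⟨q, hq, hqlen⟩ := hreach.exists_path_of_dist
  have heq : P.walk = q := congrArg Subtype.val
    ((hG.subsingleton_path _ _).elim (⟨P.walk, P.isPath⟩ : G.Path _ _) ⟨q, hq⟩)
  rw [apply_zero, apply_length, ← hqlen, ← heq, P.length_walk]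

lemma dist_apply_apply (hG : G.IsAcyclic) (P : PathOfLength G k) (hi : i ≤ k) (hj : j ≤ k) :
    G.dist (P i) (P j) = Nat.dist i j := by
  wlog hij : i ≤ j generalizing i j
  · rw [SimpleGraph.dist_comm, this hj hi (le_of_not_ge hij), Nat.dist_comm]
  have hsegment := (P.segment i (j - i) (by omega)).dist_zero_length hG
  rwa [segment_apply _ _ (Nat.zero_le _), segment_apply _ _ le_rfl, add_zero,
    Nat.add_sub_cancel' hij, ← Nat.dist_eq_sub_of_le hij] at hsegment

/-- An isometry argument: the distances between the ends of the two edges, measured along `P` and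
along `Q`, force `c = b` and `d = a` with both edges traversed in opposite directions. -/
lemma reversed_of_edge_eq_edge (hG : G.IsAcyclic) {P Q : PathOfLength G k} {a b c d : ℕ}
    (hc : a < c ∧ c ≤ b) (hd : a ≤ d ∧ d ≤ b) (hb : b < k)
    (hca : s(Q c, Q (c + 1)) = s(P a, P (a + 1))) (hdb : s(Q d, Q (d + 1)) = s(P b, P (b + 1))) :
    Q a = P (b + 1) ∧ Q (b + 1) = P a := by
  have hQ : ∀ i ≤ k, ∀ j ≤ k, G.dist (Q i) (Q j) = i - j + (j - i) :=
    fun i hi j hj => Q.dist_apply_apply hG hi hj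
  have hP : ∀ i ≤ k, ∀ j ≤ k, G.dist (P i) (P j) = i - j + (j - i) :=
    fun i hi j hj => P.dist_apply_apply hG hi hj
  have hQ₁ := hQ c (by omega) d (by omega)
  have hQ₂ := hQ c (by omega) (d + 1) (by omega)
  have hQ₃ := hQ (c + 1) (by omega) d (by omega)
  have hQ₄ := hQ (c + 1) (by omega) (d + 1) (by omega)
  have hP₁ := hP a (by omega) b (by omega)
  have hP₂ := hP a (by omega) (b + 1) (by omega)
  have hP₃ := hP (a + 1) (by omega) b (by omega)
  have hP₄ := hP (a + 1) (by omega) (b + 1) (by omega)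
  rcases Sym2.eq_iff.1 hca with ⟨hc₁, hc₂⟩ | ⟨hc₁, hc₂⟩ <;>
  rcases Sym2.eq_iff.1 hdb with ⟨hd₁, hd₂⟩ | ⟨hd₁, hd₂⟩ <;>
  rw [hc₁, hd₁] at hQ₁ <;> rw [hc₁, hd₂] at hQ₂ <;> rw [hc₂, hd₁] at hQ₃ <;>
  rw [hc₂, hd₂] at hQ₄ <;>
  first
  | omega
  | obtain ⟨rfl, rfl⟩ : c = b ∧ d = a := by omega
    exact ⟨hd₁, hc₂⟩

/-- Along their common stretch the two paths run in opposite directions, so they meet halfway: on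
an edge if `b - a` is even, at a vertex if `b - a` is odd. -/
lemma edge_eq_or_fold_of_reversed (hG : G.IsAcyclic) {P Q : PathOfLength G k} {a b : ℕ}
    (hab : a ≤ b) (hb : b < k) (hQa : Q a = P (b + 1)) (hQb : Q (b + 1) = P a) :
    (∃ t < k, s(Q t, Q (t + 1)) = s(P t, P (t + 1))) ∨
      ∃ t, t + 1 < k ∧ Q t = P (t + 2) ∧ Q (t + 1) = P (t + 1) := by
  obtain ⟨n, rfl⟩ := Nat.exists_eq_add_of_le hab
  have hPseg : a + (n + 1) ≤ k := hb
  have heq : Q.segment a (n + 1) hPseg = (P.segment a (n + 1) hPseg).reverse := by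
    refine eq_of_isAcyclic hG ?_ ?_
    · rw [reverse_apply, segment_apply _ _ (Nat.zero_le _), segment_apply _ _ (Nat.sub_le _ _)]
      simpa [add_assoc] using hQa
    · rw [reverse_apply, segment_apply _ _ le_rfl, segment_apply _ _ (Nat.sub_le _ _)]
      simpa [add_assoc] using hQb
  have hreflect : ∀ i j, i + j = n + 1 → Q (a + i) = P (a + j) := by
    intro i j hij
    have hi := congrArg (fun R : PathOfLength G (n + 1) => R i) heq
    simp only [reverse_apply] at hi
    rwa [segment_apply _ _ (by omega), segment_apply _ _ (Nat.sub_le _ _),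
      show n + 1 - i = j by omega] at hi
  rcases Nat.even_or_odd' n with ⟨m, rfl | rfl⟩
  · refine Or.inl ⟨a + m, by omega, ?_⟩
    have h₁ : Q (a + m) = P (a + m + 1) := hreflect m (m + 1) (by omega)
    have h₂ : Q (a + m + 1) = P (a + m) := hreflect (m + 1) m (by omega)
    rw [h₁, h₂, Sym2.eq_swap]
  · exact Or.inr ⟨a + m, by omega, hreflect m (m + 2) (by omega),
      hreflect (m + 1) (m + 1) (by omega)⟩

lemma exists_edge_eq_or_fold (hG : G.IsAcyclic) {P Q : PathOfLength G k} {T : Finset ℕ}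
    (hT : T.Nonempty) (hTk : ∀ t ∈ T, t < k)
    (hedge : ∀ t ∈ T, ∃ t' ∈ T, s(Q t, Q (t + 1)) = s(P t', P (t' + 1))) :
    (∃ t < k, s(Q t, Q (t + 1)) = s(P t, P (t + 1))) ∨
      ∃ t, t + 1 < k ∧ Q t = P (t + 2) ∧ Q (t + 1) = P (t + 1) := by
  choose! σ hσT hσ using hedge
  have hinj : Set.InjOn σ T := fun s hs t ht hst =>
    (Q.edge_inj (hTk s hs) (hTk t ht)).1 <| by rw [hσ s hs, hσ t ht, hst]
  have hsurj := Finset.surjOn_of_injOn_of_card_le σ (fun t ht => hσT t ht) hinj le_rfl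
  obtain ⟨c, hc, hca⟩ := hsurj (T.min'_mem hT)
  obtain ⟨d, hd, hdb⟩ := hsurj (T.max'_mem hT)
  have hbk := hTk _ (T.max'_mem hT)
  obtain hac | hac := (T.min'_le c hc).eq_or_lt
  · exact Or.inl ⟨c, hTk c hc, by rw [hσ c hc, hca, hac]⟩
  · obtain ⟨hQa, hQb⟩ := reversed_of_edge_eq_edge hG ⟨hac, T.le_max' c hc⟩
      ⟨T.min'_le d hd, T.le_max' d hd⟩ hbk (hca ▸ hσ c hc) (hdb ▸ hσ d hd)
    exact edge_eq_or_fold_of_reversed hG (T.min'_le _ (T.max'_mem hT)) hbk hQa hQb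

lemma edge_ne_of_walkWord_eq (hinv : ∀ a, inv a ≠ a) (hgood : IsGoodLabelling G inv ℓ)
    (hred : ReducedLabelling G ℓ) {P Q : PathOfLength G k} (hPQ : P ≠ Q)
    (hword : walkWord ℓ P.walk = walkWord ℓ Q.walk) (ht : t < k) :
    s(Q t, Q (t + 1)) ≠ s(P t, P (t + 1)) := by
  rw [Ne, Sym2.eq_iff]
  rintro (⟨h, -⟩ | ⟨h₁, h₂⟩)
  · exact hPQ (eq_of_apply_eq hgood hred hword ht.le h.symm)
  · have hlabel := walkWord_eq_iff.1 hword t ht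
    rw [h₁, h₂, hgood _ _ (P.adj ht)] at hlabel
    exact hinv _ hlabel.symm

lemma not_fold_of_walkWord_eq (hgood : IsGoodLabelling G inv ℓ) (hred : ReducedLabelling G ℓ)
    {P Q : PathOfLength G k} (hword : walkWord ℓ P.walk = walkWord ℓ Q.walk) (ht : t + 1 < k) :
    ¬ (Q t = P (t + 2) ∧ Q (t + 1) = P (t + 1)) := by
  rintro ⟨h₁, h₂⟩
  have hlabel := walkWord_eq_iff.1 hword t (Nat.lt_of_succ_lt ht)
  rw [h₁, h₂] at hlabel
  have hadj := P.adj (Nat.lt_of_succ_lt ht)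
  have hne : P t ≠ P (t + 2) := fun h => by
    have := (P.apply_inj (by omega) (by omega)).1 h
    omega
  refine hred _ _ _ hadj.symm (P.adj ht) hne ?_
  rw [hgood _ _ hadj, hlabel, hgood _ _ (P.adj ht).symm]

/-- If the labels of some edges of `P` were not determined, then the edges of `Q` at the same
positions would again be among these edges of `P`, which is impossible in a forest. -/
lemma labels_determined (hG : G.IsAcyclic) (hinv : ∀ a, inv a ≠ a) {L M : V → V → S}
    (hL : IsGoodLabelling G inv L) (hred : ReducedLabelling G L) (hM : IsGoodLabelling G inv M)
    {P Q : PathOfLength G k} (hPQ : P ≠ Q) (hwordL : walkWord L P.walk = walkWord L Q.walk)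
    (hwordM : walkWord M P.walk = walkWord M Q.walk)
    (hoff : ∀ x y, s(x, y) ∉ P.edges → L x y = M x y) :
    ∀ t < k, L (P t) (P (t + 1)) = M (P t) (P (t + 1)) := by
  classical
  by_contra! hdiff
  obtain ⟨t₀, ht₀, hne₀⟩ := hdiff
  set T := {t ∈ Finset.range k | L (P t) (P (t + 1)) ≠ M (P t) (P (t + 1))} with hTdef
  have hmem : ∀ {t}, t ∈ T ↔ t < k ∧ L (P t) (P (t + 1)) ≠ M (P t) (P (t + 1)) := by
    simp [hTdef]
  have hedge : ∀ t ∈ T, ∃ t' ∈ T, s(Q t, Q (t + 1)) = s(P t', P (t' + 1)) := by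
    intro t ht
    obtain ⟨htk, hne⟩ := hmem.1 ht
    rw [walkWord_eq_iff.1 hwordL t htk, walkWord_eq_iff.1 hwordM t htk] at hne
    obtain ⟨t', ht', heq⟩ := mem_edges.1 (not_imp_comm.1 (hoff _ _) hne)
    refine ⟨t', hmem.2 ⟨ht', fun h => hne ?_⟩, heq.symm⟩
    rcases Sym2.eq_iff.1 heq with ⟨h₁, h₂⟩ | ⟨h₁, h₂⟩
    · rwa [← h₁, ← h₂]
    · rw [← h₁, ← h₂, hL _ _ (P.adj ht'), hM _ _ (P.adj ht'), h]
  rcases exists_edge_eq_or_fold hG ⟨t₀, hmem.2 ⟨ht₀, hne₀⟩⟩ (fun t ht => (hmem.1 ht).1) hedge with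
    ⟨t, ht, heq⟩ | ⟨t, ht, hfold⟩
  · exact edge_ne_of_walkWord_eq hinv hL hred hPQ hwordL ht heq
  · exact not_fold_of_walkWord_eq hL hred hwordL ht hfold

end PathOfLength

lemma isAcyclic_fromEdgeSet_of_card_lt_egirth {F : Finset (Sym2 V)}
    (hF : (F : Set (Sym2 V)) ⊆ G.edgeSet) (hcard : (F.card : ℕ∞) < G.egirth) :
    (fromEdgeSet (F : Set (Sym2 V))).IsAcyclic := by
  classical
  intro v c hc
  have hle : fromEdgeSet (F : Set (Sym2 V)) ≤ G :=
    (fromEdgeSet_mono hF).trans_eq (fromEdgeSet_edgeSet G)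
  have hgirth : G.egirth ≤ c.length := by
    simpa using ((hc.mapLe hle).egirth_le_length)
  have hedges : c.edges.toFinset ⊆ F := fun e he => by
    have := c.edges_subset_edgeSet (List.mem_toFinset.1 he)
    rw [edgeSet_fromEdgeSet] at this
    exact this.1
  have hlength : c.length ≤ F.card := by
    rw [← Walk.length_edges, ← List.toFinset_card_of_nodup hc.edges_nodup]
    exact Finset.card_le_card hedges
  exact (hcard.trans_le hgirth).not_ge (by exact_mod_cast hlength)

namespace PathOfLength

/-- The graph formed by the edges of `P` and `Q`. -/
def unionGraph (P Q : PathOfLength G k) : SimpleGraph V :=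
  fromEdgeSet ((P.edges : Set (Sym2 V)) ∪ Q.edges)

lemma union_edges_subset_edgeSet (P Q : PathOfLength G k) :
    (P.edges : Set (Sym2 V)) ∪ Q.edges ⊆ G.edgeSet :=
  Set.union_subset P.edges_subset_edgeSet Q.edges_subset_edgeSet

lemma edgeSet_unionGraph (P Q : PathOfLength G k) :
    (P.unionGraph Q).edgeSet = (P.edges : Set (Sym2 V)) ∪ Q.edges := by
  rw [unionGraph, edgeSet_fromEdgeSet, sdiff_eq_left, Set.disjoint_left]
  exact fun e he => G.not_isDiag_of_mem_edgeSet (P.union_edges_subset_edgeSet Q he)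

lemma unionGraph_le (P Q : PathOfLength G k) : P.unionGraph Q ≤ G := by
  rw [← edgeSet_subset_edgeSet, edgeSet_unionGraph]
  exact P.union_edges_subset_edgeSet Q

lemma unionGraph_comm (P Q : PathOfLength G k) : P.unionGraph Q = Q.unionGraph P := by
  rw [unionGraph, unionGraph, Set.union_comm]

lemma isAcyclic_unionGraph (P Q : PathOfLength G k) (hgirth : ((2 * k : ℕ) : ℕ∞) < G.egirth) :
    (P.unionGraph Q).IsAcyclic := by
  classical
  rw [unionGraph, ← Finset.coe_union]
  refine isAcyclic_fromEdgeSet_of_card_lt_egirth (G := G) ?_ (lt_of_le_of_lt ?_ hgirth)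
  · rw [Finset.coe_union]
    exact P.union_edges_subset_edgeSet Q
  · refine Nat.cast_le.2 ((Finset.card_union_le _ _).trans_eq ?_)
    rw [P.card_edges, Q.card_edges, two_mul]

section Counting

open Finset

variable [Finite V] [G.LocallyFinite] {d : ℕ}

open Classical in
lemma card_extensions_le (hdeg : ∀ v, G.degree v ≤ d + 1) (Q : PathOfLength G (k + 1)) :
    #{P : PathOfLength G (k + 2) | P.segment 0 (k + 1) (by omega) = Q} ≤ d := by
  have hadj : G.Adj (Q (k + 1)) (Q k) := (Q.adj k.lt_succ_self).symm
  have hcard : #((G.neighborFinset (Q (k + 1))).erase (Q k)) ≤ d := by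
    rw [card_erase_of_mem ((G.mem_neighborFinset _ _).2 hadj), card_neighborFinset_eq_degree]
    exact Nat.sub_le_of_le_add (hdeg _)
  have hprefix : ∀ {P : PathOfLength G (k + 2)}, P.segment 0 (k + 1) (by omega) = Q →
      ∀ t ≤ k + 1, P t = Q t := by
    intro P hP t ht
    rw [← hP, segment_apply _ _ ht, zero_add]
  refine (card_le_card_of_injOn (fun P => P (k + 2)) ?_ ?_).trans hcard
  · intro P hP
    have hPQ := hprefix (mem_filter.1 hP).2
    have hlast : P (k + 2) ≠ P k := fun h => by
      have := (P.apply_inj le_rfl (by omega)).1 h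
      omega
    rw [hPQ k (by omega)] at hlast
    refine mem_coe.2 (mem_erase.2 ⟨hlast, (G.mem_neighborFinset _ _).2 ?_⟩)
    rw [← hPQ (k + 1) le_rfl]
    exact P.adj (Nat.lt_succ_self _)
  · intro P hP P' hP' hlast
    have hPQ := hprefix (mem_filter.1 hP).2
    have hPQ' := hprefix (mem_filter.1 hP').2
    refine ext fun t ht => ?_
    obtain rfl | ht := ht.eq_or_lt
    · exact hlast
    · rw [hPQ t (Nat.le_of_lt_succ ht), hPQ' t (Nat.le_of_lt_succ ht)]

open Classical in
lemma card_through_dart_le (hdeg : ∀ v, G.degree v ≤ d + 1) (ht : t ≤ k) (x y : V) :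
    #{P : PathOfLength G (k + 1) | P t = x ∧ P (t + 1) = y} ≤ d ^ k := by
  induction k generalizing t x y with
  | zero =>
    obtain rfl := Nat.le_zero.1 ht
    refine card_le_one.2 fun P hP Q hQ => ext fun t ht => ?_
    obtain ⟨hP₀, hP₁⟩ := (mem_filter.1 hP).2
    obtain ⟨hQ₀, hQ₁⟩ := (mem_filter.1 hQ).2
    interval_cases t
    · exact hP₀.trans hQ₀.symm
    · exact hP₁.trans hQ₁.symm
  | succ k ih =>
    wlog htk : t ≤ k generalizing t x y
    · obtain rfl : t = k + 1 := by omega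
      refine (card_le_card_of_injOn reverse ?_ ?_).trans (this (Nat.zero_le _) y x k.zero_le)
      · intro P hP
        obtain ⟨hx, hy⟩ := (mem_filter.1 hP).2
        refine (mem_filter_univ _).2 ⟨?_, ?_⟩ <;> rw [reverse_apply] <;> assumption
      · exact (Function.LeftInverse.injective reverse_reverse).injOn
    rw [pow_succ']
    refine (card_le_mul_card_image_of_maps_to (f := fun P => P.segment 0 (k + 1) (by omega))
      (t := {Q : PathOfLength G (k + 1) | Q t = x ∧ Q (t + 1) = y}) ?_ d ?_).trans
      (Nat.mul_le_mul_left d (ih htk x y))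
    · intro P hP
      rw [mem_filter_univ, segment_apply _ _ (by omega), segment_apply _ _ (by omega), zero_add,
        zero_add]
      exact (mem_filter.1 hP).2
    · exact fun Q _ => (card_le_card (filter_subset_filter _ (filter_subset _ _))).trans
        (card_extensions_le hdeg Q)

open Classical in
lemma card_through_edge_le (hdeg : ∀ v, G.degree v ≤ d + 1) (k : ℕ) (e : Sym2 V) :
    #{P : PathOfLength G k | e ∈ P.edges} ≤ 2 * k * d ^ (k - 1) := by
  obtain _ | n := k
  · simp [mem_edges]
  obtain ⟨x, y⟩ := e
  let passes (x y : V) (t : ℕ) : Finset (PathOfLength G (n + 1)) :=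
    {P | P t = x ∧ P (t + 1) = y}
  have hsub : ({P : PathOfLength G (n + 1) | s(x, y) ∈ P.edges} : Finset _) ⊆
      (range (n + 1)).biUnion fun t => passes x y t ∪ passes y x t := by
    intro P hP
    obtain ⟨t, ht, he⟩ := mem_edges.1 (mem_filter.1 hP).2
    simpa [passes, mem_biUnion] using ⟨t, Nat.le_of_lt_succ ht, Sym2.eq_iff.1 he⟩
  calc _ ≤ #((range (n + 1)).biUnion fun t => passes x y t ∪ passes y x t) := card_le_card hsub
    _ ≤ #(range (n + 1)) * (d ^ n + d ^ n) := by
        refine card_biUnion_le_card_mul _ _ _ fun t ht => (card_union_le _ _).trans ?_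
        have htn := Nat.le_of_lt_succ (mem_range.1 ht)
        exact Nat.add_le_add (card_through_dart_le hdeg htn x y) (card_through_dart_le hdeg htn y x)
    _ = 2 * (n + 1) * d ^ n := by rw [card_range]; ring

lemma card_le (hdeg : ∀ v, G.degree v ≤ d + 1) (hk : 0 < k) :
    Fintype.card (PathOfLength G k) ≤ 2 * Nat.card G.edgeSet * d ^ (k - 1) := by
  classical
  let _ := Fintype.ofFinite V
  obtain ⟨n, rfl⟩ := Nat.exists_eq_add_one.2 hk
  let firstDart (P : PathOfLength G (n + 1)) : G.Dart := ⟨(P 0, P 1), P.adj n.succ_pos⟩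
  rw [Nat.card_eq_fintype_card, ← edgeFinset_card, ← G.dart_card_eq_twice_card_edges, mul_comm]
  refine card_le_mul_card_image_of_maps_to (f := firstDart) (t := univ) (fun _ _ => mem_univ _) _
    fun D _ => (card_le_card fun P hP => ?_).trans
      (card_through_dart_le hdeg n.zero_le D.fst D.snd)
  obtain rfl : firstDart P = D := (mem_filter.1 hP).2
  exact (mem_filter_univ _).2 ⟨rfl, rfl⟩

end Counting

end PathOfLength

end Paths

/-! ### Bad events for labellings -/

section Labellings

open Finset

variable {V S : Type*} [LinearOrder V] {G : SimpleGraph V} {k d : ℕ} {inv : S → S}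
  {f g : Sym2 V → S} {x y : V}

/-- The labelling that gives the ordered pair `(x, y)` with `x < y` the label `f s(x, y)`. The
linear order serves only to choose an orientation of each edge. -/
def orientedLabel (inv : S → S) (f : Sym2 V → S) (x y : V) : S :=
  if x < y then f s(x, y) else inv (f s(x, y))

lemma isGoodLabelling_orientedLabel (hinv : Function.Involutive inv) (f : Sym2 V → S) :
    IsGoodLabelling G inv (orientedLabel inv f) := by
  intro x y hxy
  rcases hxy.ne.lt_or_gt with h | h <;>
    simp [orientedLabel, h, h.not_gt, hinv _, Sym2.eq_swap (a := x) (b := y)]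

lemma orientedLabel_inj (hinv : Function.Involutive inv) :
    orientedLabel inv f x y = orientedLabel inv g x y ↔ f s(x, y) = g s(x, y) := by
  unfold orientedLabel
  split_ifs
  · rfl
  · exact hinv.injective.eq_iff

lemma walkWord_orientedLabel_inj (hinv : Function.Involutive inv) (P : PathOfLength G k) :
    walkWord (orientedLabel inv f) P.walk = walkWord (orientedLabel inv g) P.walk ↔
      ∀ e ∈ P.edges, f e = g e := by
  simp only [PathOfLength.walkWord_eq_iff, orientedLabel_inj hinv, PathOfLength.mem_edges]
  grind

lemma reducedLabelling_orientedLabel_congr (hinv : Function.Involutive inv)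
    (hfg : ∀ e ∈ G.edgeSet, f e = g e) :
    ReducedLabelling G (orientedLabel inv f) ↔ ReducedLabelling G (orientedLabel inv g) := by
  have hlabel : ∀ x y, G.Adj x y → orientedLabel inv f x y = orientedLabel inv g x y :=
    fun x y hxy => (orientedLabel_inj hinv).2 (hfg _ hxy)
  simp +contextual only [ReducedLabelling, hlabel]

/-- The two edges of `P` get equal labels when read from its middle vertex. -/
noncomputable def turnEvent (hinv : Function.Involutive inv) (P : PathOfLength G 2) :
    BadEvent (Sym2 V) S where
  core := {s(P 0, P 1)}
  scope := P.edges
  Occurs f := orientedLabel inv f (P 1) (P 0) = orientedLabel inv f (P 1) (P 2)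
  core_nonempty := singleton_nonempty _
  core_subset_scope := singleton_subset_iff.2 (P.edge_mem_edges two_pos)
  dependsOn_scope f g hfg := by
    have h₀ : f s(P 1, P 0) = g s(P 1, P 0) := by
      rw [Sym2.eq_swap]; exact hfg _ (P.edge_mem_edges two_pos)
    have h₁ : f s(P 1, P 2) = g s(P 1, P 2) := hfg _ (P.edge_mem_edges one_lt_two)
    beta_reduce
    rw [(orientedLabel_inj hinv).2 h₀, (orientedLabel_inj hinv).2 h₁]
  determined f g hf hg hfg := by
    have hedge : s(P 1, P 2) ≠ s(P 0, P 1) := fun h =>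
      one_ne_zero ((P.edge_inj one_lt_two two_pos).1 h)
    have hoff : f s(P 1, P 2) = g s(P 1, P 2) := hfg _ (notMem_singleton.2 hedge)
    have hon : f s(P 0, P 1) = g s(P 0, P 1) := by
      rw [Sym2.eq_swap, ← orientedLabel_inj hinv, hf, hg, orientedLabel_inj hinv, hoff]
    exact funext fun e => by
      by_cases he : e = s(P 0, P 1)
      · rw [he, hon]
      · exact hfg e (notMem_singleton.2 he)

/-- The path `P` reads the word `w`. -/
noncomputable def wordEvent (hinv : Function.Involutive inv) (hk : 0 < k) (w : List S)
    (P : PathOfLength G k) : BadEvent (Sym2 V) S where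
  core := P.edges
  scope := P.edges
  Occurs f := walkWord (orientedLabel inv f) P.walk = w
  core_nonempty := ⟨_, P.edge_mem_edges hk⟩
  core_subset_scope := Subset.rfl
  dependsOn_scope f g hfg := by
    beta_reduce
    rw [(walkWord_orientedLabel_inj hinv P).2 hfg]
  determined f g hf hg hfg :=
    funext fun e => (em (e ∈ P.edges)).elim
      ((walkWord_orientedLabel_inj hinv P).1 (hf.trans hg.symm) e) (hfg e)

lemma eqOn_edges_of_repetition (hinv : Function.Involutive inv) (hinv_ne : ∀ a, inv a ≠ a)
    (hgirth : ((2 * k : ℕ) : ℕ∞) < G.egirth) {P Q : PathOfLength G k} (hPQ : P ≠ Q)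
    (hred : ReducedLabelling (P.unionGraph Q) (orientedLabel inv f))
    (hf : walkWord (orientedLabel inv f) P.walk = walkWord (orientedLabel inv f) Q.walk)
    (hg : walkWord (orientedLabel inv g) P.walk = walkWord (orientedLabel inv g) Q.walk)
    (hoff : ∀ e ∉ P.edges, f e = g e) : ∀ e ∈ P.edges, f e = g e := by
  have hP : (P.edges : Set (Sym2 V)) ⊆ (P.unionGraph Q).edgeSet := by
    rw [PathOfLength.edgeSet_unionGraph]; exact Set.subset_union_left
  have hQ : (Q.edges : Set (Sym2 V)) ⊆ (P.unionGraph Q).edgeSet := by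
    rw [PathOfLength.edgeSet_unionGraph]; exact Set.subset_union_right
  have hdet := PathOfLength.labels_determined (P := P.transfer _ hP) (Q := Q.transfer _ hQ)
    (P.isAcyclic_unionGraph Q hgirth) hinv_ne (isGoodLabelling_orientedLabel hinv f) hred
    (isGoodLabelling_orientedLabel hinv g) (fun h => hPQ (PathOfLength.transfer_injective h))
  simp only [PathOfLength.walkWord_eq_iff, PathOfLength.transfer_apply,
    PathOfLength.mem_edges, orientedLabel_inj hinv] at hdet hf hg hoff ⊢
  rintro e ⟨t, ht, rfl⟩
  exact hdet hf hg (fun x y => hoff s(x, y)) t ht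

/-- The distinct paths `P` and `Q` read the same word. Only labellings that are reduced on the two
paths count, since for others the labels on `P` need not be determined by the other labels. -/
noncomputable def repetitionEvent (hinv : Function.Involutive inv) (hinv_ne : ∀ a, inv a ≠ a)
    (hk : 0 < k) (hgirth : ((2 * k : ℕ) : ℕ∞) < G.egirth) (P Q : PathOfLength G k) :
    BadEvent (Sym2 V) S where
  core := P.edges
  scope := P.edges ∪ Q.edges
  Occurs f := P ≠ Q ∧ ReducedLabelling (P.unionGraph Q) (orientedLabel inv f) ∧
    walkWord (orientedLabel inv f) P.walk = walkWord (orientedLabel inv f) Q.walk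
  core_nonempty := ⟨_, P.edge_mem_edges hk⟩
  core_subset_scope := subset_union_left
  dependsOn_scope f g hfg := by
    have hP := (walkWord_orientedLabel_inj hinv P).2 fun e he => hfg e (mem_union_left _ he)
    have hQ := (walkWord_orientedLabel_inj hinv Q).2 fun e he => hfg e (mem_union_right _ he)
    have hred : ∀ e ∈ (P.unionGraph Q).edgeSet, f e = g e := fun e he =>
      hfg e (by rwa [coe_union, ← P.edgeSet_unionGraph Q])
    beta_reduce
    rw [hP, hQ, reducedLabelling_orientedLabel_congr hinv hred]
  determined f g := fun ⟨hPQ, hred, hf⟩ ⟨_, _, hg⟩ hfg =>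
    funext fun e => (em (e ∈ P.edges)).elim
      (eqOn_edges_of_repetition hinv hinv_ne hgirth hPQ hred hf hg hfg e) (hfg e)

lemma coresCover_turnEvent (hinv : Function.Involutive inv) :
    BadEvent.CoresCover fun P : PathOfLength G 2 => turnEvent hinv P := by
  intro P e he
  obtain ⟨t, ht, rfl⟩ := PathOfLength.mem_edges.1 he
  interval_cases t
  · exact ⟨P, mem_singleton_self _, rfl, fun _ => id⟩
  · refine ⟨P.reverse, ?_, P.edges_reverse, fun f hf => ?_⟩
    · simp only [turnEvent, PathOfLength.reverse_apply, mem_singleton]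
      exact Sym2.eq_swap
    · simp only [turnEvent, PathOfLength.reverse_apply] at hf ⊢
      exact hf.symm

lemma coresCover_wordEvent {κ : Type*} (hinv : Function.Involutive inv) (w : κ → List S)
    (hw : ∀ a, 0 < (w a).length) :
    BadEvent.CoresCover fun b : Σ a, PathOfLength G (w a).length =>
      wordEvent hinv (hw b.1) (w b.1) b.2 :=
  fun b _ he => ⟨b, he, rfl, fun _ => id⟩

lemma coresCover_repetitionEvent (hinv : Function.Involutive inv) (hinv_ne : ∀ a, inv a ≠ a)
    (hk : 0 < k) (hgirth : ((2 * k : ℕ) : ℕ∞) < G.egirth) :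
    BadEvent.CoresCover fun b : PathOfLength G k × PathOfLength G k =>
      repetitionEvent hinv hinv_ne hk hgirth b.1 b.2 := by
  rintro ⟨P, Q⟩ e he
  rcases mem_union.1 he with he | he
  · exact ⟨(P, Q), he, rfl, fun _ => id⟩
  · refine ⟨(Q, P), he, union_comm _ _, fun f ⟨hPQ, hred, hf⟩ => ⟨hPQ.symm, ?_, hf.symm⟩⟩
    rwa [PathOfLength.unionGraph_comm]

section Weights

/-- An upper bound for the weight at an edge, with parameter `β`, of a family of events whose
cores are the edge sets of the paths of length `k` in a graph of maximum degree at most `d + 1`. -/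
noncomputable def pathLoad (d : ℕ) (β : ℝ) (k : ℕ) : ℝ :=
  2 * k * (d / β) ^ (k - 1)

variable [Finite V] [G.LocallyFinite] {β : ℝ}

lemma weight_turnEvent_le (hinv : Function.Involutive inv) (hdeg : ∀ v, G.degree v ≤ d + 1)
    (β : ℝ) (e : Sym2 V) :
    BadEvent.weight (fun P : PathOfLength G 2 => turnEvent hinv P) β e ≤ (2 * d : ℕ) := by
  classical
  rw [BadEvent.weight_of_card_core_eq (n := 1) fun P => card_singleton _, pow_zero, mul_one,
    Nat.cast_le]
  induction e with | _ x y
  let startsWith (x y : V) : Finset (PathOfLength G 2) := {P | P 0 = x ∧ P 1 = y}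
  have hcard : ∀ x y, #(startsWith x y) ≤ d := fun x y => by
    convert PathOfLength.card_through_dart_le hdeg zero_le_one x y
    exact (pow_one d).symm
  calc _ ≤ #(startsWith x y ∪ startsWith y x) := by
        refine card_le_card fun P hP => ?_
        have heq : s(x, y) = s(P 0, P 1) := mem_singleton.1 (mem_filter.1 hP).2
        simpa [startsWith] using Sym2.eq_iff.1 heq.symm
    _ ≤ #(startsWith x y) + #(startsWith y x) := card_union_le _ _
    _ ≤ d + d := Nat.add_le_add (hcard x y) (hcard y x)
    _ = 2 * d := (two_mul d).symm

lemma weight_le_of_core_eq_edges {A : PathOfLength G k → BadEvent (Sym2 V) S}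
    (hA : ∀ P, (A P).core = P.edges) (hdeg : ∀ v, G.degree v ≤ d + 1) (hβ : 0 ≤ β) (e : Sym2 V) :
    BadEvent.weight A β e ≤ pathLoad d β k := by
  classical
  have hcard : #{P | e ∈ (A P).core} ≤ 2 * k * d ^ (k - 1) := by
    convert PathOfLength.card_through_edge_le hdeg k e
    exact hA _
  rw [BadEvent.weight_of_card_core_eq fun P => (hA P).symm ▸ P.card_edges]
  calc _ ≤ ((2 * k * d ^ (k - 1) : ℕ) : ℝ) * β⁻¹ ^ (k - 1) := by gcongr
    _ = pathLoad d β k := by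
        rw [pathLoad, div_eq_mul_inv, mul_pow]; push_cast; ring

lemma weight_repetitionEvent_le (hinv : Function.Involutive inv) (hinv_ne : ∀ a, inv a ≠ a)
    (hk : 0 < k) (hgirth : ((2 * k : ℕ) : ℕ∞) < G.egirth) (hdeg : ∀ v, G.degree v ≤ d + 1)
    (hβ : 0 ≤ β) (e : Sym2 V) :
    BadEvent.weight (fun b : PathOfLength G k × PathOfLength G k =>
      repetitionEvent hinv hinv_ne hk hgirth b.1 b.2) β e ≤
      Fintype.card (PathOfLength G k) * pathLoad d β k := by
  rw [BadEvent.weight_prod, ← nsmul_eq_mul, ← card_univ]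
  exact sum_le_card_nsmul _ _ _ fun Q _ => weight_le_of_core_eq_edges (fun _ => rfl) hdeg hβ e

end Weights

end Labellings

/-! ### Labellings of sequences of graphs -/

section Existence

open Finset

variable {S : Type*} {inv : S → S} {d : ℕ} {β : ℝ}

lemma exists_labelling_avoiding {V κ : Type*} [Fintype S] [Finite V] [Fintype κ]
    {G : SimpleGraph V} [G.LocallyFinite] {k : ℕ} (hinv : Function.Involutive inv)
    (hinv_ne : ∀ a, inv a ≠ a) (hdeg : ∀ v, G.degree v ≤ d + 1) (hk : 0 < k)
    (hgirth : ((2 * k : ℕ) : ℕ∞) < G.egirth)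
    (w : κ → List S) (hw : ∀ a, 0 < (w a).length) (hβ : 0 < β)
    (hload : β + ((2 * d : ℕ) + (Fintype.card (PathOfLength G k) * pathLoad d β k +
      ∑ a, pathLoad d β (w a).length)) ≤ Fintype.card S) :
    ∃ ℓ : V → V → S, IsGoodLabelling G inv ℓ ∧ ReducedLabelling G ℓ ∧
      (∀ P Q : PathOfLength G k, walkWord ℓ P.walk = walkWord ℓ Q.walk → P = Q) ∧
      ∀ a n, ∀ P : PathOfLength G n, walkWord ℓ P.walk ≠ w a := by
  let _ : LinearOrder V := IsWellOrder.linearOrder WellOrderingRel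
  let turns (P : PathOfLength G 2) := turnEvent hinv P
  let repetitions (b : PathOfLength G k × PathOfLength G k) :=
    repetitionEvent hinv hinv_ne hk hgirth b.1 b.2
  let words (b : Σ a, PathOfLength G (w a).length) := wordEvent hinv (hw b.1) (w b.1) b.2
  have hcover : BadEvent.CoresCover (Sum.elim turns (Sum.elim repetitions words)) :=
    (coresCover_turnEvent hinv).sumElim <|
      (coresCover_repetitionEvent hinv hinv_ne hk hgirth).sumElim (coresCover_wordEvent hinv w hw)
  obtain ⟨f, hf⟩ := hcover.exists_forall_not_occurs hβ fun e => by
    refine le_trans ?_ hload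
    rw [BadEvent.weight_sumElim, BadEvent.weight_sumElim]
    gcongr
    · exact weight_turnEvent_le hinv hdeg β e
    · exact weight_repetitionEvent_le hinv hinv_ne hk hgirth hdeg hβ.le e
    · rw [BadEvent.weight_sigma fun a => wordEvent hinv (hw a) (w a)]
      exact sum_le_sum fun a _ => weight_le_of_core_eq_edges (fun _ => rfl) hdeg hβ.le e
  have hred : ReducedLabelling G (orientedLabel inv f) := by
    intro v u x hu hx hux
    obtain ⟨P, rfl, rfl, rfl⟩ := PathOfLength.exists_turn hu hx hux
    exact hf (.inl P)
  refine ⟨orientedLabel inv f, isGoodLabelling_orientedLabel hinv f, hred, fun P Q hPQ => ?_,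
    fun a n P hP => ?_⟩
  · by_contra hne
    have hle := P.unionGraph_le Q
    exact hf (.inr (.inl (P, Q)))
      ⟨hne, fun v u x hu hx => hred v u x (hle hu) (hle hx), hPQ⟩
  · obtain rfl : n = (w a).length := by rw [← hP, length_walkWord, P.length_walk]
    exact hf (.inr (.inr ⟨a, P⟩)) hP

section Sequence

variable {V : ℕ → Type*} {G : ∀ n, SimpleGraph (V n)} {k : ℕ → ℕ}

lemma exists_labellings_words_ne [Fintype S] [∀ n, Finite (V n)] [∀ n, (G n).LocallyFinite]
    (hinv : Function.Involutive inv) (hinv_ne : ∀ a, inv a ≠ a)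
    (hdeg : ∀ n v, (G n).degree v ≤ d + 1) (hk : ∀ n, 0 < k n)
    (hgirth : ∀ n, ((2 * k n : ℕ) : ℕ∞) < (G n).egirth) (hβ : 0 < β)
    (hload : ∀ n, β + (2 * d + ∑ i ∈ range n,
      Fintype.card (PathOfLength (G i) (k i)) * pathLoad d β (k i)) ≤ Fintype.card S) :
    ∃ ℓ : ∀ n, V n → V n → S, ∀ n, IsGoodLabelling (G n) inv (ℓ n) ∧
      ReducedLabelling (G n) (ℓ n) ∧
      (∀ P Q : PathOfLength (G n) (k n), walkWord (ℓ n) P.walk = walkWord (ℓ n) Q.walk → P = Q) ∧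
      ∀ i < n, ∀ (P : PathOfLength (G i) (k i)) (Q : PathOfLength (G n) (k i)),
        walkWord (ℓ i) P.walk ≠ walkWord (ℓ n) Q.walk := by
  have hstep : ∀ n, ∀ prev : ∀ i < n, V i → V i → S, ∃ L : V n → V n → S,
      IsGoodLabelling (G n) inv L ∧ ReducedLabelling (G n) L ∧
      (∀ P Q : PathOfLength (G n) (k n), walkWord L P.walk = walkWord L Q.walk → P = Q) ∧
      ∀ i, ∀ hi : i < n, ∀ (P : PathOfLength (G i) (k i)) (Q : PathOfLength (G n) (k i)),
        walkWord (prev i hi) P.walk ≠ walkWord L Q.walk := by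
    intro n prev
    let w (a : Σ i : Fin n, PathOfLength (G i) (k i)) : List S :=
      walkWord (prev a.1 a.1.isLt) a.2.walk
    have hw : ∀ a, (w a).length = k a.1 := fun a => by rw [length_walkWord, a.2.length_walk]
    have hsum : ∑ a, pathLoad d β (w a).length =
        ∑ i ∈ range n, Fintype.card (PathOfLength (G i) (k i)) * pathLoad d β (k i) := by
      simp only [hw, Fintype.sum_sigma, sum_const, card_univ, nsmul_eq_mul]
      exact Fin.sum_univ_eq_sum_range
        (fun i => Fintype.card (PathOfLength (G i) (k i)) * pathLoad d β (k i)) n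
    obtain ⟨L, hgood, hred, hinj, hne⟩ := exists_labelling_avoiding hinv hinv_ne (hdeg n) (hk n)
      (hgirth n) w (fun a => (hw a).symm ▸ hk a.1) hβ <| by
        rw [hsum, add_comm (_ * _), ← sum_range_succ]
        exact_mod_cast hload (n + 1)
    exact ⟨L, hgood, hred, hinj, fun i hi P Q => (hne ⟨⟨i, hi⟩, P⟩ _ Q).symm⟩
  choose F hF using hstep
  let ℓ : ∀ n, V n → V n → S := wellFounded_lt.fix F
  have hℓ : ∀ n, ℓ n = F n fun i _ => ℓ i := wellFounded_lt.fix_eq F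
  exact ⟨ℓ, fun n => by rw [hℓ n]; exact hF n _⟩

lemma smallCancellation_of_words_ne {ℓ : ∀ n, V n → V n → S} {lam : ℝ}
    (hk : Monotone k) (hlam : ∀ n, k n ≤ lam * (G n).girth)
    (hgood : ∀ n, IsGoodLabelling (G n) inv (ℓ n)) (hred : ∀ n, ReducedLabelling (G n) (ℓ n))
    (hinj : ∀ n, ∀ P Q : PathOfLength (G n) (k n),
      walkWord (ℓ n) P.walk = walkWord (ℓ n) Q.walk → P = Q)
    (hne : ∀ i j, i < j → ∀ (P : PathOfLength (G i) (k i)) (Q : PathOfLength (G j) (k i)),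
      walkWord (ℓ i) P.walk ≠ walkWord (ℓ j) Q.walk) :
    SmallCancellation V G inv ℓ lam := by
  refine ⟨hgood, hred, fun i j u v p x y q hp hq hlong hword => ?_⟩
  have hki : k i ≤ p.length := by exact_mod_cast (hlam i).trans hlong
  have hpq : q.length = p.length := by
    rw [← length_walkWord (ℓ j), ← length_walkWord (ℓ i), hword]
  let P : PathOfLength (G i) p.length := ⟨p, hp, rfl⟩
  let Q : PathOfLength (G j) p.length := ⟨q, hq, hpq⟩
  have hprefix : ∀ n, ∀ hn : 0 + n ≤ p.length,
      walkWord (ℓ i) (P.segment 0 n hn).walk = walkWord (ℓ j) (Q.segment 0 n hn).walk :=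
    fun n hn => PathOfLength.walkWord_segment_eq hword hn
  rcases lt_trichotomy i j with hij | rfl | hij
  · exact absurd (hprefix (k i) (by omega)) (hne i j hij _ _)
  · have hstart := hinj i _ _ (hprefix (k i) (by omega))
    have hzero : P 0 = Q 0 := by
      rw [← P.segment_apply (by omega) (k i).zero_le, hstart, Q.segment_apply _ (k i).zero_le]
    have hPQ : P = Q := PathOfLength.eq_of_apply_eq (hgood i) (hred i) hword (Nat.zero_le _) hzero
    obtain ⟨rfl, rfl, hpq⟩ := PathOfLength.mk.inj hPQ
    rw [eq_of_heq hpq]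
  · have hkj : k j ≤ k i := hk hij.le
    exact absurd (hprefix (k j) (by omega)).symm (hne j i hij _ _)

lemma exists_sum_comp_le_of_summable {f : ℕ → ℝ} (hf : Summable f) {ε : ℝ} (hε : 0 < ε) :
    ∃ N, ∀ k : ℕ → ℕ, Function.Injective k → (∀ n, N ≤ k n) →
      ∀ n, ∑ i ∈ range n, f (k i) ≤ ε := by
  obtain ⟨N, hN⟩ := hf.nat_tsum_vanishing (Iic_mem_nhds hε)
  refine ⟨N, fun k hinj hk n => ?_⟩
  have himage : (((range n).image k : Finset ℕ) : Set ℕ) ⊆ {m | N ≤ m} := by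
    rw [coe_image]
    exact Set.image_subset_iff.2 fun i _ => hk i
  have hsum := hN _ himage
  rwa [Finset.tsum_subtype', sum_image hinj.injOn] at hsum

lemma summable_natCast_mul_geometric_pred {r : ℝ} (hr : ‖r‖ < 1) :
    Summable fun k : ℕ => (k : ℝ) * r ^ (k - 1) := by
  rw [← summable_nat_add_iff 1]
  refine (summable_pow_mul_geometric_of_norm_lt_one 1 hr).add
    (summable_geometric_of_norm_lt_one hr) |>.congr fun k => ?_
  simp only [Nat.add_sub_cancel]
  push_cast
  ring

lemma card_mul_pathLoad_le {V : Type*} [Finite V] {G : SimpleGraph V} [G.LocallyFinite] {k : ℕ}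
    {C c : ℝ} (hdeg : ∀ v, G.degree v ≤ d + 1) (hk : 0 < k) (hβ : 0 ≤ β)
    (hE : Nat.card G.edgeSet ≤ C * c ^ k) :
    Fintype.card (PathOfLength G k) * pathLoad d β k ≤
      4 * C * c * (k * (c * d ^ 2 / β) ^ (k - 1)) := by
  obtain ⟨n, rfl⟩ := Nat.exists_eq_add_one.2 hk
  have hcard : (Fintype.card (PathOfLength G (n + 1)) : ℝ) ≤ 2 * Nat.card G.edgeSet * d ^ n := by
    exact_mod_cast PathOfLength.card_le hdeg hk
  calc _ ≤ 2 * (C * c ^ (n + 1)) * d ^ n * pathLoad d β (n + 1) := by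
        have hload : 0 ≤ pathLoad d β (n + 1) := by unfold pathLoad; positivity
        grw [hcard, hE]
    _ = _ := by
        simp only [pathLoad, Nat.add_sub_cancel, div_pow, mul_pow]
        ring

theorem exists_threshold_smallCancellation [Fintype S] {C c : ℝ}
    (hinv : Function.Involutive inv) (hinv_ne : ∀ a, inv a ≠ a) (hc : 0 ≤ c)
    (hcβ : c * d ^ 2 < β) (hβ : β + 2 * d < Fintype.card S) :
    ∃ N, ∀ (V : ℕ → Type*) [∀ n, Finite (V n)] (G : ∀ n, SimpleGraph (V n))
      [∀ n, (G n).LocallyFinite] (k : ℕ → ℕ) (lam : ℝ),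
      (∀ n v, (G n).degree v ≤ d + 1) → StrictMono k → N ≤ k 0 →
      (∀ n, ((2 * k n : ℕ) : ℕ∞) < (G n).egirth) → (∀ n, k n ≤ lam * (G n).girth) →
      (∀ n, Nat.card (G n).edgeSet ≤ C * c ^ k n) →
      ∃ ℓ : ∀ n, V n → V n → S, SmallCancellation V G inv ℓ lam := by
  have hratio : 0 ≤ c * d ^ 2 := by positivity
  have hβ₀ : 0 < β := hratio.trans_lt hcβ
  have hsummable : Summable fun k : ℕ => 4 * C * c * (k * (c * d ^ 2 / β) ^ (k - 1)) := by
    refine (summable_natCast_mul_geometric_pred ?_).mul_left _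
    rwa [Real.norm_of_nonneg (by positivity), div_lt_one hβ₀]
  obtain ⟨N, hN⟩ := exists_sum_comp_le_of_summable hsummable (sub_pos.2 hβ)
  refine ⟨N + 1, fun V _ G _ k lam hdeg hk hkN hgirth hlam hE => ?_⟩
  have hk_le : ∀ n, N + 1 ≤ k n := fun n => hkN.trans (hk.monotone n.zero_le)
  have hk_pos : ∀ n, 0 < k n := fun n => N.succ_pos.trans_le (hk_le n)
  have hload : ∀ n, β + (2 * d + ∑ i ∈ range n,
      Fintype.card (PathOfLength (G i) (k i)) * pathLoad d β (k i)) ≤ Fintype.card S := by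
    intro n
    have hterms := sum_le_sum fun i (_ : i ∈ range n) =>
      card_mul_pathLoad_le (hdeg i) (hk_pos i) hβ₀.le (hE i)
    linarith [hN k hk.injective (fun i => N.le_succ.trans (hk_le i)) n]
  obtain ⟨ℓ, hℓ⟩ :=
    exists_labellings_words_ne hinv hinv_ne hdeg hk_pos hgirth hβ₀ hload
  exact ⟨ℓ, smallCancellation_of_words_ne hk.monotone hlam (fun n => (hℓ n).1)
    (fun n => (hℓ n).2.1) (fun n => (hℓ n).2.2.1) fun i j hij => (hℓ j).2.2.2 i hij⟩

end Sequence

end Existence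

/-! ### Cubic graphs -/

lemma natCast_lt_egirth {V : Type*} {G : SimpleGraph V} {n : ℕ} (h : n < G.girth) :
    (n : ℕ∞) < G.egirth :=
  (Nat.cast_lt.2 h).trans_le G.egirth.natCast_toNat_le_self

lemma two_rpow_le_of_le_six_mul_add_five {g k : ℕ} (hg : g ≤ 6 * k + 5) :
    (2 : ℝ) ^ ((3 * (g : ℝ) + 6) / 4) ≤ 64 * ((2 : ℝ) ^ (9 / 2 : ℝ)) ^ k := by
  have hg' : (g : ℝ) ≤ 6 * k + 5 := by exact_mod_cast hg
  calc (2 : ℝ) ^ ((3 * (g : ℝ) + 6) / 4) ≤ (2 : ℝ) ^ ((6 : ℝ) + 9 / 2 * k) :=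
        Real.rpow_le_rpow_of_exponent_le one_le_two (by linarith)
    _ = 64 * ((2 : ℝ) ^ (9 / 2 : ℝ)) ^ k := by
        rw [Real.rpow_add two_pos, Real.rpow_mul two_pos.le, Real.rpow_natCast]
        norm_num

lemma two_rpow_nine_halves_mul_four_lt : (2 : ℝ) ^ (9 / 2 : ℝ) * 4 < 91 := by
  have hsq : ((2 : ℝ) ^ (9 / 2 : ℝ)) ^ 2 = 512 := by
    rw [← Real.rpow_natCast, ← Real.rpow_mul two_pos.le]
    norm_num
  refine lt_of_pow_lt_pow_left₀ 2 (by norm_num) ?_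
  rw [mul_pow, hsq]
  norm_num

theorem statement16_general :
    ∃ g₀ : ℕ, ∀ (V : ℕ → Type*) [∀ n, Finite (V n)]
      (G : ∀ n, SimpleGraph (V n)) [∀ n, (G n).LocallyFinite],
      (∀ n v, (G n).degree v ≤ 3) →
      g₀ ≤ (G 0).girth →
      (∀ n, (Nat.card (G n).edgeSet : ℝ) ≤
        (3 / 2) * (2 : ℝ) ^ ((3 * ((G n).girth : ℝ) + 6) / 4)) →
      (∀ n, (G n).girth / 6 < (G (n + 1)).girth / 6) →
      ∃ (S : Type) (_ : Fintype S) (inv : S → S),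
        Nat.card S = 96 ∧ Function.Involutive inv ∧ (∀ a, inv a ≠ a) ∧
        ∃ ℓ : ∀ n, V n → V n → S, SmallCancellation V G inv ℓ (1 / 6 : ℝ) := by
  let inv (a : Fin 48 × Bool) : Fin 48 × Bool := (a.1, !a.2)
  have hinv : Function.Involutive inv := fun a => by simp [inv]
  have hinv_ne : ∀ a, inv a ≠ a := fun a => by simp [inv, Prod.ext_iff]
  obtain ⟨N, hN⟩ := exists_threshold_smallCancellation (d := 2) (β := 91) (C := 96)
    (c := (2 : ℝ) ^ (9 / 2 : ℝ)) hinv hinv_ne (by positivity)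
    (by norm_num [two_rpow_nine_halves_mul_four_lt]) (by norm_num)
  refine ⟨6 * (N + 1), fun V _ G _ hdeg hg₀ hE hstep =>
    ⟨_, inferInstance, inv, by simp, hinv, hinv_ne, ?_⟩⟩
  have hmono : StrictMono fun n => (G n).girth / 6 := strictMono_nat_of_lt_succ hstep
  have hzero : N + 1 ≤ (G 0).girth / 6 := by omega
  refine hN V G (fun n => (G n).girth / 6) (1 / 6) hdeg hmono (by omega) ?_ ?_ ?_
  · intro n
    have hn : (G 0).girth / 6 ≤ (G n).girth / 6 := hmono.monotone n.zero_le
    exact natCast_lt_egirth (by omega)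
  · intro n
    rw [one_div_mul_eq_div]
    exact_mod_cast Nat.cast_div_le
  · intro n
    have hpow := two_rpow_le_of_le_six_mul_add_five (g := (G n).girth) (k := (G n).girth / 6)
      (by omega)
    linarith [hE n]

theorem statement16 :
    ∃ g₀ : ℕ, ∀ (V : ℕ → Type) [∀ n, Fintype (V n)]
      (G : ∀ n, SimpleGraph (V n)) [∀ n, DecidableRel (G n).Adj],
      (∀ n, (G n).IsRegularOfDegree 3) →
      g₀ ≤ (G 0).girth →
      Filter.Tendsto (fun n => (G n).girth) Filter.atTop Filter.atTop →
      (∀ n, ((G n).diam : ℝ) ≤ (3 / 2) * ((G n).girth : ℝ) + 5) →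
      (∀ n, (Nat.card (G n).edgeSet : ℝ) ≤
        (3 / 2) * (2 : ℝ) ^ ((3 * ((G n).girth : ℝ) + 6) / 4)) →
      (∀ n, 1 < (G n).girth / 6) →
      (∀ n, (G n).girth / 6 < (G (n + 1)).girth / 6) →
      ∃ (S : Type) (_ : Fintype S) (inv : S → S),
        Nat.card S = 96 ∧ Function.Involutive inv ∧ (∀ a, inv a ≠ a) ∧
        ∃ ℓ : ∀ n, V n → V n → S, SmallCancellation V G inv ℓ (1 / 6 : ℝ) := by
  obtain ⟨g₀, hg₀⟩ := statement16_general
  exact ⟨g₀, fun V _ G _ hreg hgirth _ _ hE _ hstep =>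
    hg₀ V G (fun n v => (hreg n v).le) hgirth hE hstep⟩
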